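/- Every bounded linear operator T from L_∞[0,1] into a Banach space X containing no subspace isomorphic to c₀ is weakly compact, and hence strictly singular. -/

import Mathlib

open MeasureTheory ENNReal Filter Set ZeroAtInfty

/-- Lebesgue measure on `[0,1]`. -/
noncomputable def μ01 : Measure ℝ := volume.restrict (Set.Icc 0 1)

instance : Fact (volume (Set.Icc (0:ℝ) 1) < ∞) := ⟨by simp⟩
instance : IsFiniteMeasure μ01 := ⟨by simp [μ01]⟩

/-- An operator is strictly singular if it is bounded below on no infinite-dimensional
closed subspace. -/
def StrictlySingular {E F : Type*} [NormedAddCommGroup E] [NormedSpace ℝ E]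
    [NormedAddCommGroup F] [NormedSpace ℝ F] (T : E →L[ℝ] F) : Prop :=
  ∀ Y : Submodule ℝ E, IsClosed (Y : Set E) → ¬ FiniteDimensional ℝ Y →
    ¬ ∃ c : ℝ, 0 < c ∧ ∀ y ∈ Y, c * ‖y‖ ≤ ‖T y‖

/-- `X` contains a subspace isomorphic to `c₀`: there is an isomorphic embedding of
`c₀ = C₀(ℕ, ℝ)` into `X`. -/
def ContainsC0 (X : Type*) [NormedAddCommGroup X] [NormedSpace ℝ X] : Prop :=
  ∃ (e : C₀(ℕ, ℝ) →L[ℝ] X) (c : ℝ), 0 < c ∧ ∀ f, c * ‖f‖ ≤ ‖e f‖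

/-- A bounded operator is weakly compact if the image of the closed unit ball is
relatively compact in the weak topology. -/
def WeaklyCompactOperator {E X : Type*} [NormedAddCommGroup E] [NormedSpace ℝ E]
    [NormedAddCommGroup X] [NormedSpace ℝ X] (T : E →L[ℝ] X) : Prop :=
  IsCompact (closure ((fun x => toWeakSpaceCLM ℝ X (T x)) ''
    Metric.closedBall 0 1))

lemma rosenthal_aux (δ : ℝ≥0∞) (hδ : δ ≠ ∞) (N : ℕ) : ∀ (a : ℕ → ℕ → ℝ≥0∞),
    (∀ n, ∑' k, a n k ≤ N * δ) →
    ∃ s : ℕ → ℕ, Function.Injective s ∧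
      ∀ n, ∑' k, (if k = n then 0 else a (s n) (s k)) ≤ δ := by
  induction N with
  | zero =>
    intro a ha
    refine ⟨id, Function.injective_id, fun n => ?_⟩
    have h0 : ∀ k, a n k = 0 := by
      have := ha n
      simpa using this
    simp [h0]
  | succ N ih =>
    intro a ha
    by_cases hj : ∃ j, ∀ i, ∑' k, (if k = i then 0 else a (Nat.pair j i) (Nat.pair j k)) ≤ δ
    · obtain ⟨j, hj⟩ := hj
      refine ⟨Nat.pair j, fun x y h => ?_, hj⟩
      exact (Nat.pair_eq_pair.1 h).2
    · push Not at hj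
      choose i hi using hj
      have hinj : Function.Injective (fun j => Nat.pair j (i j)) := fun x y h =>
        (Nat.pair_eq_pair.1 h).1
      obtain ⟨s, hs, hs'⟩ := ih (fun n k => a (Nat.pair n (i n)) (Nat.pair k (i k))) (by
        intro n
        have h1 : ∑' k, a (Nat.pair n (i n)) (Nat.pair k (i k))
            + ∑' k, (if k = i n then 0 else a (Nat.pair n (i n)) (Nat.pair n k))
            ≤ ∑' k, a (Nat.pair n (i n)) k := by
          have e0 : ∑' k, a (Nat.pair n (i n)) k
              = ∑' j, ∑' k, a (Nat.pair n (i n)) (Nat.pair j k) := by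
            rw [← (Nat.pairEquiv).tsum_eq (a (Nat.pair n (i n)))]
            exact ENNReal.tsum_prod (f := fun j k => a (Nat.pair n (i n)) (Nat.pair j k))
          rw [e0]
          set c := ∑' k, (if k = i n then 0 else a (Nat.pair n (i n)) (Nat.pair n k)) with hc
          have e2 : c = ∑' j, if j = n then c else 0 := by rw [tsum_ite_eq]
          rw [e2, ← ENNReal.tsum_add]
          refine ENNReal.tsum_le_tsum fun j => ?_
          by_cases hjn : j = n
          · subst hjn
            rw [if_pos rfl, ENNReal.tsum_eq_add_tsum_ite
              (f := fun k => a (Nat.pair j (i j)) (Nat.pair j k)) (i j)]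
            refine add_le_add le_rfl (le_of_eq ?_)
            rw [hc]
            refine tsum_congr fun k => ?_
            by_cases hk : k = i j <;> simp [hk]
          · rw [if_neg hjn, add_zero]
            exact ENNReal.le_tsum (f := fun k => a (Nat.pair n (i n)) (Nat.pair j k)) (i j)
        have h2 := h1.trans (ha (Nat.pair n (i n)))
        have h3 : ∑' k, a (Nat.pair n (i n)) (Nat.pair k (i k)) + δ ≤ N * δ + δ := by
          calc _ ≤ _ := add_le_add le_rfl (hi n).le
            _ ≤ _ := h2
            _ = _ := by push_cast; ring
        exact (ENNReal.add_le_add_iff_right hδ).1 h3)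
      exact ⟨fun n => Nat.pair (s n) (i (s n)), hinj.comp hs, hs'⟩

lemma containsC0_of {X : Type*} [NormedAddCommGroup X] [NormedSpace ℝ X] [CompleteSpace X]
    (x : ℕ → X) (M ε : ℝ) (hM : 0 < M) (hε : 0 < ε)
    (hb : ∀ (F : Finset ℕ) (a : ℕ → ℝ) (c : ℝ), 0 ≤ c → (∀ k ∈ F, |a k| ≤ c) →
      ‖∑ k ∈ F, a k • x k‖ ≤ M * c)
    (hx : ∀ k, ε ≤ ‖x k‖) : ContainsC0 X := by
  choose g hg1 hg2 using fun k => exists_dual_vector'' ℝ (x k)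
  have hrow : ∀ n (F : Finset ℕ), ∑ k ∈ F, |g n (x k)| ≤ M := by
    intro n F
    have h := hb F (fun k => SignType.sign (g n (x k))) 1 zero_le_one (by
      intro k _
      rcases lt_trichotomy (g n (x k)) 0 with h | h | h <;> simp [h])
    have h2 : g n (∑ k ∈ F, ((SignType.sign (g n (x k)) : SignType) : ℝ) • x k)
        = ∑ k ∈ F, |g n (x k)| := by
      simp [map_sum, sign_mul_self]
    calc _ = _ := h2.symm
      _ ≤ ‖g n (∑ k ∈ F, ((SignType.sign (g n (x k)) : SignType) : ℝ) • x k)‖ := le_abs_self _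
      _ ≤ 1 * ‖∑ k ∈ F, ((SignType.sign (g n (x k)) : SignType) : ℝ) • x k‖ :=
        (g n).le_of_opNorm_le (hg1 n) _
      _ ≤ M := by rw [one_mul]; simpa using h
  obtain ⟨N, hN⟩ := exists_nat_ge (M / (ε / 2))
  have hN' : M ≤ N * (ε / 2) := by rwa [div_le_iff₀ (by positivity)] at hN
  obtain ⟨s, hs, hs'⟩ := rosenthal_aux (ENNReal.ofReal (ε / 2)) (by simp) N
    (fun n k => ENNReal.ofReal |g n (x k)|) (by
      intro n
      have : (N : ℝ≥0∞) * ENNReal.ofReal (ε / 2) = ENNReal.ofReal (N * (ε / 2)) := by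
        rw [ENNReal.ofReal_mul (by positivity)]; simp
      rw [this]
      refine ENNReal.tsum_le_of_sum_range_le fun m => ?_
      rw [← ENNReal.ofReal_sum_of_nonneg (fun _ _ => abs_nonneg _)]
      exact ENNReal.ofReal_le_ofReal ((hrow n _).trans hN'))
  have hs2 : ∀ n (F : Finset ℕ), n ∉ F → ∑ k ∈ F, |g (s n) (x (s k))| ≤ ε / 2 := by
    intro n F hn
    have h1 := (ENNReal.sum_le_tsum F).trans (hs' n)
    have h2 : ∑ k ∈ F, (if k = n then 0 else ENNReal.ofReal |g (s n) (x (s k))|)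
        = ENNReal.ofReal (∑ k ∈ F, |g (s n) (x (s k))|) := by
      rw [ENNReal.ofReal_sum_of_nonneg (fun _ _ => abs_nonneg _)]
      refine Finset.sum_congr rfl fun k hk => if_neg ?_
      rintro rfl; exact hn hk
    rw [h2] at h1
    exact (ENNReal.ofReal_le_ofReal_iff (by positivity)).1 h1
  set y : ℕ → X := fun k => x (s k) with hy
  have hby : ∀ (F : Finset ℕ) (a : ℕ → ℝ) (c : ℝ), 0 ≤ c → (∀ k ∈ F, |a k| ≤ c) →
      ‖∑ k ∈ F, a k • y k‖ ≤ M * c := by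
    intro F a c hc ha
    have := hb (F.map ⟨s, hs⟩) (fun k => a (Function.invFun s k)) c hc (by
      intro k hk
      simp only [Finset.mem_map, Function.Embedding.coeFn_mk] at hk
      obtain ⟨j, hj, rfl⟩ := hk
      rw [Function.leftInverse_invFun hs]; exact ha j hj)
    simpa [Function.leftInverse_invFun hs _] using this
  have hsum : ∀ a : C₀(ℕ, ℝ), Summable fun k => a k • y k := by
    intro a
    rw [summable_iff_vanishing_norm]
    intro η hη
    have hz := a.zero_at_infty'
    rw [Filter.cocompact_eq_cofinite, Nat.cofinite_eq_atTop] at hz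
    have := (Metric.tendsto_atTop.1 hz) (η / (2 * M)) (by positivity)
    obtain ⟨n, hn⟩ := this
    refine ⟨Finset.range n, fun t ht => ?_⟩
    refine (hby t a (η / (2 * M)) (by positivity) ?_).trans_lt ?_
    · intro k hk
      have : n ≤ k := by
        by_contra h
        exact Finset.disjoint_left.1 ht hk (Finset.mem_range.2 (not_le.1 h))
      have := hn k this
      rw [Real.dist_eq, sub_zero] at this
      exact this.le
    · field_simp; linarith
  have hnorm : ∀ (a : C₀(ℕ, ℝ)) k, |a k| ≤ ‖a‖ := fun a k => by
    have := a.toBCF.norm_coe_le_norm k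
    exact this
  let e0 : C₀(ℕ, ℝ) →ₗ[ℝ] X :=
    { toFun := fun a => ∑' k, a k • y k
      map_add' := fun a b => by
        simp only [ZeroAtInftyContinuousMap.add_apply, add_smul]
        exact (hsum a).tsum_add (hsum b)
      map_smul' := fun c a => by
        simp only [ZeroAtInftyContinuousMap.smul_apply, smul_assoc, RingHom.id_apply]
        exact (hsum a).tsum_const_smul c }
  let e : C₀(ℕ, ℝ) →L[ℝ] X := e0.mkContinuous M (fun a => by
    have := (hsum a).hasSum.norm
    exact le_of_tendsto (hsum a).hasSum.norm (Filter.Eventually.of_forall fun F =>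
      hby F a ‖a‖ (norm_nonneg _) (fun k _ => hnorm a k)))
  refine ⟨e, ε / 2, by positivity, fun a => ?_⟩
  have key : ∀ n, ε * |a n| ≤ ‖e a‖ + ε / 2 * ‖a‖ := by
    intro n
    have h1 : HasSum (fun k => a k * g (s n) (y k)) (g (s n) (e a)) := by
      have := (g (s n)).hasSum (hsum a).hasSum
      simp only [map_smul, smul_eq_mul] at this
      exact this
    have h2 : ∀ᶠ F : Finset ℕ in atTop,
        ε * |a n| - ε / 2 * ‖a‖ ≤ |∑ k ∈ F, a k * g (s n) (y k)| := by
      filter_upwards [eventually_ge_atTop {n}] with F hF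
      have hn : n ∈ F := hF (by simp)
      rw [← Finset.add_sum_erase F _ hn]
      have h3 : |∑ k ∈ F.erase n, a k * g (s n) (y k)| ≤ ε / 2 * ‖a‖ := by
        calc _ ≤ ∑ k ∈ F.erase n, |a k * g (s n) (y k)| := Finset.abs_sum_le_sum_abs _ _
          _ ≤ ∑ k ∈ F.erase n, ‖a‖ * |g (s n) (y k)| := by
            refine Finset.sum_le_sum fun k _ => ?_
            rw [abs_mul]
            exact mul_le_mul_of_nonneg_right (hnorm a k) (abs_nonneg _)
          _ = ‖a‖ * ∑ k ∈ F.erase n, |g (s n) (y k)| := by rw [Finset.mul_sum]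
          _ ≤ ‖a‖ * (ε / 2) :=
            mul_le_mul_of_nonneg_left (hs2 n _ (by simp)) (norm_nonneg _)
          _ = _ := by ring
      have h4 : ε * |a n| ≤ |a n * g (s n) (y n)| := by
        rw [abs_mul, mul_comm]
        refine mul_le_mul_of_nonneg_left ?_ (abs_nonneg _)
        have : g (s n) (y n) = ‖y n‖ := hg2 (s n)
        rw [this, abs_of_nonneg (norm_nonneg _)]
        exact hx _
      have h5 := abs_sub_abs_le_abs_sub (a n * g (s n) (y n))
        (-(∑ k ∈ F.erase n, a k * g (s n) (y k)))
      rw [abs_neg, sub_neg_eq_add] at h5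
      linarith
    have h3 := ge_of_tendsto h1.abs h2
    have h4 : |g (s n) (e a)| ≤ 1 * ‖e a‖ := (g (s n)).le_of_opNorm_le (hg1 _) _
    linarith
  have h6 : ‖a‖ ≤ (‖e a‖ + ε / 2 * ‖a‖) / ε := by
    rw [← ZeroAtInftyContinuousMap.norm_toBCF_eq_norm,
      BoundedContinuousFunction.norm_le (by positivity)]
    intro n
    rw [le_div_iff₀ hε, mul_comm]
    exact key n
  rw [le_div_iff₀ hε] at h6
  linarith

/-- Bounded measurable functions on `ℝ`. -/
def BM : Subalgebra ℝ (ℝ → ℝ) where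
  carrier := {f | Measurable f ∧ ∃ C, ∀ x, |f x| ≤ C}
  mul_mem' := by
    rintro f g ⟨hf, C, hC⟩ ⟨hg, D, hD⟩
    refine ⟨hf.mul hg, C * D, fun x => ?_⟩
    rw [Pi.mul_apply, abs_mul]
    exact mul_le_mul (hC x) (hD x) (abs_nonneg _) ((abs_nonneg _).trans (hC x))
  add_mem' := by
    rintro f g ⟨hf, C, hC⟩ ⟨hg, D, hD⟩
    refine ⟨hf.add hg, C + D, fun x => ?_⟩
    exact (abs_add_le _ _).trans (add_le_add (hC x) (hD x))
  algebraMap_mem' := fun r => ⟨measurable_const, |r|, fun x => le_rfl⟩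

/-- Indicator function. -/
noncomputable def ind (A : Set ℝ) (hA : MeasurableSet A) : BM :=
  ⟨A.indicator 1, measurable_one.indicator hA, 1, fun x => by
    by_cases h : x ∈ A <;> simp [h]⟩

lemma ind_mem {A : Set ℝ} (hA : MeasurableSet A) {x : ℝ} (h : x ∈ A) : (ind A hA).1 x = 1 := by
  simp [ind, h]
lemma ind_not_mem {A : Set ℝ} (hA : MeasurableSet A) {x : ℝ} (h : x ∉ A) :
    (ind A hA).1 x = 0 := by
  simp [ind, h]
lemma BM.add_val (f g : BM) (x : ℝ) : (f + g).1 x = f.1 x + g.1 x := rfl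
lemma BM.sub_val (f g : BM) (x : ℝ) : (f - g).1 x = f.1 x - g.1 x := rfl
lemma BM.mul_val (f g : BM) (x : ℝ) : (f * g).1 x = f.1 x * g.1 x := rfl
lemma BM.neg_val (f : BM) (x : ℝ) : (-f).1 x = - f.1 x := rfl
lemma BM.one_val (x : ℝ) : (1 : BM).1 x = 1 := rfl
lemma BM.zero_val (x : ℝ) : (0 : BM).1 x = 0 := rfl
lemma BM.smul_val (c : ℝ) (f : BM) (x : ℝ) : (c • f).1 x = c * f.1 x := rfl
lemma BM.sum_val {ι : Type*} (s : Finset ι) (f : ι → BM) (x : ℝ) :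
    (∑ i ∈ s, f i).1 x = ∑ i ∈ s, (f i).1 x := by
  classical
  induction s using Finset.induction_on with
  | empty => simp [BM.zero_val]
  | insert a s ha ih => rw [Finset.sum_insert ha, Finset.sum_insert ha, BM.add_val, ih]
lemma BM.ext' {f g : BM} (h : ∀ x, f.1 x = g.1 x) : f = g := Subtype.ext (funext h)

section
variable {X : Type*} [NormedAddCommGroup X] [NormedSpace ℝ X]

/-- Bound on the operator. -/
def OpBd (S : BM →ₗ[ℝ] X) (M : ℝ) : Prop :=
  ∀ (f : BM) (c : ℝ), 0 ≤ c → (∀ x, |f.1 x| ≤ c) → ‖S f‖ ≤ M * c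

/-- Semivariation of `A` is at most `η`. -/
def Sm (S : BM →ₗ[ℝ] X) (A : Set ℝ) (η : ℝ) : Prop :=
  ∀ f : BM, (∀ x, |f.1 x| ≤ 1) → (∀ x ∉ A, f.1 x = 0) → ‖S f‖ ≤ η

lemma Sm.mono {S : BM →ₗ[ℝ] X} {A B : Set ℝ} {η θ : ℝ} (h : Sm S A η) (hBA : B ⊆ A)
    (hη : η ≤ θ) : Sm S B θ := fun f h1 h2 =>
  (h f h1 (fun x hx => h2 x (fun hb => hx (hBA hb)))).trans hη

lemma ind_mul_abs_le {A : Set ℝ} (hA : MeasurableSet A) (f : BM) (x : ℝ) :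
    |(ind A hA * f).1 x| ≤ |f.1 x| := by
  rw [BM.mul_val]
  by_cases h : x ∈ A
  · rw [ind_mem hA h, one_mul]
  · rw [ind_not_mem hA h, zero_mul, abs_zero]; exact abs_nonneg _

lemma Sm.union {S : BM →ₗ[ℝ] X} {A B : Set ℝ} {a b : ℝ} (hA : MeasurableSet A)
    (ha : Sm S A a) (hb : Sm S B b) : Sm S (A ∪ B) (a + b) := by
  intro f h1 h2
  have e : f = ind A hA * f + (f - ind A hA * f) := by ring
  rw [e, map_add]
  refine (norm_add_le _ _).trans (add_le_add (ha _ ?_ ?_) (hb _ ?_ ?_))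
  · exact fun x => (ind_mul_abs_le hA f x).trans (h1 x)
  · intro x hx; rw [BM.mul_val, ind_not_mem hA hx, zero_mul]
  · intro x
    rw [BM.sub_val, BM.mul_val]
    by_cases h : x ∈ A
    · simp [ind_mem hA h]
    · simpa [ind_not_mem hA h] using h1 x
  · intro x hx
    rw [BM.sub_val, BM.mul_val]
    by_cases h : x ∈ A
    · simp [ind_mem hA h]
    · rw [h2 x (by simp [h, hx])]; simp

lemma exhaustive [CompleteSpace X] (hX : ¬ ContainsC0 X) {S : BM →ₗ[ℝ] X} {M : ℝ} (hM : 0 < M)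
    (hS : OpBd S M) (A : ℕ → Set ℝ) (hd : Pairwise (Function.onFun Disjoint A)) {η : ℝ} (hη : 0 < η) :
    ∃ n, Sm S (A n) η := by
  by_contra hcon
  push Not at hcon
  unfold Sm at hcon
  push Not at hcon
  choose f hf1 hf2 hf3 using hcon
  apply hX
  refine containsC0_of (fun n => S (f n)) M η hM hη ?_ (fun k => (hf3 k).le)
  intro F a c hc ha
  have : ∑ k ∈ F, a k • S (f k) = S (∑ k ∈ F, a k • f k) := by simp [map_sum]
  rw [this]
  refine hS _ c hc fun x => ?_
  rw [BM.sum_val]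
  by_cases hx : ∃ k ∈ F, x ∈ A k
  · obtain ⟨k, hk, hxk⟩ := hx
    rw [Finset.sum_eq_single_of_mem k hk]
    · rw [BM.smul_val, abs_mul]
      calc _ ≤ c * 1 := mul_le_mul (ha k hk) (hf1 k x) (abs_nonneg _) hc
        _ = c := mul_one c
    · intro j _ hjk
      rw [BM.smul_val, hf2 j x, mul_zero]
      exact fun hxj => Set.disjoint_left.1 (hd hjk) hxj hxk
  · push Not at hx
    rw [Finset.sum_eq_zero]
    · simpa using hc
    · intro j hj
      rw [BM.smul_val, hf2 j x (hx j hj), mul_zero]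

lemma exhaustive_mono [CompleteSpace X] (hX : ¬ ContainsC0 X) {S : BM →ₗ[ℝ] X} {M : ℝ}
    (hM : 0 < M) (hS : OpBd S M) (A : ℕ → Set ℝ) (hA : Monotone A) {η : ℝ} (hη : 0 < η) :
    ∃ p, ∀ q, Sm S (A q \ A p) η := by
  by_contra hcon
  push Not at hcon
  choose q hq using hcon
  have hlt : ∀ p, p < q p := by
    intro p
    by_contra h
    apply hq p
    have : A (q p) \ A p = ∅ := by
      rw [Set.sdiff_eq_empty]; exact hA (not_lt.1 h)
    rw [this]
    intro f _ h2
    have : f = 0 := BM.ext' (fun x => h2 x (by simp))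
    rw [this]; simpa using hη.le
  let r : ℕ → ℕ := fun n => q^[n] 0
  have hr : ∀ n, r (n + 1) = q (r n) := fun n => Function.iterate_succ_apply' q n 0
  have hrm : Monotone r := monotone_nat_of_le_succ fun n => by rw [hr]; exact (hlt _).le
  obtain ⟨n, hn⟩ := exhaustive hX hM hS (fun n => A (r (n + 1)) \ A (r n)) (by
    have key : ∀ m n, m < n → Disjoint (A (r (m + 1)) \ A (r m)) (A (r (n + 1)) \ A (r n)) := by
      intro m n hmn
      rw [Set.disjoint_left]
      rintro x ⟨h1, _⟩ ⟨_, h2⟩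
      exact h2 (hA (hrm hmn) h1)
    intro m n hmn
    rcases lt_or_gt_of_ne hmn with h | h
    · exact key m n h
    · exact (key n m h).symm) hη
  rw [hr] at hn
  exact hq _ hn

/-- Positive part bounded functional: admissible control functionals. -/
def Good (S : BM →ₗ[ℝ] X) (l : BM →ₗ[ℝ] ℝ) : Prop :=
  (∀ f : BM, (∀ x, 0 ≤ f.1 x) → 0 ≤ l f) ∧
    ∀ A (hA : MeasurableSet A), Sm S A 0 → l (ind A hA) = 0

lemma Good.mono {S : BM →ₗ[ℝ] X} {l : BM →ₗ[ℝ] ℝ} (h : Good S l) {f g : BM}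
    (hfg : ∀ x, f.1 x ≤ g.1 x) : l f ≤ l g := by
  have := h.1 (g - f) (fun x => by rw [BM.sub_val]; linarith [hfg x])
  rw [map_sub] at this; linarith

lemma exists_modulus {S : BM →ₗ[ℝ] X} {M : ℝ} (hS : OpBd S M)
    (ψ : StrongDual ℝ X) (hψ : ‖ψ‖ ≤ 1) :
    ∃ l : BM →ₗ[ℝ] ℝ, Good S l ∧
      (∀ A (hA : MeasurableSet A) η, Sm S A η → l (ind A hA) ≤ η) ∧
      (∀ f g : BM, (∀ x, |g.1 x| ≤ f.1 x) → (∀ x, f.1 x ≤ 1) → ψ (S g) ≤ l f) := by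
  have hψ' : ∀ x, ψ x ≤ ‖x‖ := fun x => by
    have : |ψ x| ≤ 1 * ‖x‖ := ψ.le_of_opNorm_le hψ x
    linarith [le_abs_self (ψ x)]
  let P : BM → Set ℝ := fun f => {t | ∃ g : BM, (∀ x, |g.1 x| ≤ max (f.1 x) 0) ∧ ψ (S g) = t}
  have hP0 : ∀ f, (0 : ℝ) ∈ P f := fun f => ⟨0, fun x => by simp [BM.zero_val], by simp⟩
  have hPb : ∀ f, BddAbove (P f) := by
    intro f
    obtain ⟨C, hC⟩ := f.2.2
    have hC0 : 0 ≤ C := (abs_nonneg _).trans (hC 0)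
    refine ⟨M * C, ?_⟩
    rintro t ⟨g, hg, rfl⟩
    refine (hψ' _).trans (hS g C hC0 fun x => (hg x).trans ?_)
    exact max_le ((le_abs_self _).trans (hC x)) hC0
  let p : BM → ℝ := fun f => sSup (P f)
  have hle : ∀ f g : BM, (∀ x, |g.1 x| ≤ max (f.1 x) 0) → ψ (S g) ≤ p f := fun f g h =>
    le_csSup (hPb f) ⟨g, h, rfl⟩
  have hge : ∀ (f : BM) (t : ℝ), (∀ g : BM, (∀ x, |g.1 x| ≤ max (f.1 x) 0) → ψ (S g) ≤ t) →
      p f ≤ t := by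
    intro f t h
    refine csSup_le ⟨0, hP0 f⟩ ?_
    rintro _ ⟨g, hg, rfl⟩
    exact h g hg
  have hp0 : ∀ f, 0 ≤ p f := fun f => le_csSup (hPb f) (hP0 f)
  have hom_le : ∀ c : ℝ, 0 < c → ∀ f, p (c • f) ≤ c * p f := by
    intro c hc f
    refine hge _ _ fun g hg => ?_
    have := hle f (c⁻¹ • g) (fun x => by
      rw [BM.smul_val, abs_mul, abs_of_pos (inv_pos.2 hc), inv_mul_le_iff₀ hc]
      have := hg x
      rw [BM.smul_val] at this
      rwa [mul_max_of_nonneg _ _ hc.le, mul_zero])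
    rw [map_smul, map_smul, smul_eq_mul, inv_mul_le_iff₀ hc] at this
    exact this
  have hom : ∀ c : ℝ, 0 < c → ∀ f, p (c • f) = c * p f := by
    intro c hc f
    refine le_antisymm (hom_le c hc f) ?_
    have := hom_le c⁻¹ (inv_pos.2 hc) (c • f)
    rw [smul_smul, inv_mul_cancel₀ hc.ne', one_smul, le_inv_mul_iff₀ hc] at this
    exact this
  have hadd : ∀ f g, p (f + g) ≤ p f + p g := by
    intro f g
    refine hge _ _ fun h hh => ?_
    let h1 : BM := ⟨fun x => max (-(max (f.1 x) 0)) (min (h.1 x) (max (f.1 x) 0)), by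
      refine ⟨?_, ?_⟩
      · have := f.2.1; have := h.2.1
        fun_prop
      · obtain ⟨C, hC⟩ := f.2.2
        refine ⟨C, fun x => ?_⟩
        have h0 := hC x
        have h00 := (abs_nonneg _).trans h0
        rw [abs_le] at h0 ⊢
        constructor
        · exact le_trans (neg_le_neg (max_le h0.2 h00)) (le_max_left _ _)
        · exact max_le (by linarith [le_max_right (f.1 x) 0])
            ((min_le_right _ _).trans (max_le h0.2 h00))⟩
    have e : h = h1 + (h - h1) := by ring
    have v : ∀ x, h1.1 x = max (-(max (f.1 x) 0)) (min (h.1 x) (max (f.1 x) 0)) := fun x => rfl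
    rw [e, map_add, map_add]
    refine add_le_add (hle _ _ fun x => ?_) (hle _ _ fun x => ?_)
    · rw [v, abs_le]
      have := le_max_right (f.1 x) 0
      exact ⟨le_max_left _ _, max_le (by linarith) (min_le_right _ _)⟩
    · rw [BM.sub_val, v]
      have := hh x
      rw [BM.add_val] at this
      generalize f.1 x = a at *
      generalize g.1 x = b at *
      generalize h.1 x = d at *
      rw [abs_le] at this ⊢
      have h3 : max (a + b) 0 ≤ max a 0 + max b 0 := by grind
      grind
  have hone : (1 : BM) ≠ 0 := by
    intro h
    have : (1 : BM).1 0 = (0 : BM).1 0 := by rw [h]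
    rw [BM.one_val, BM.zero_val] at this
    exact one_ne_zero this
  obtain ⟨l, hl1, hl2⟩ := exists_extension_of_le_sublinear
    (LinearPMap.mkSpanSingleton (K := ℝ) (1 : BM) (p 1) hone) p hom hadd (by
      rintro ⟨x, hx⟩
      obtain ⟨c, rfl⟩ := Submodule.mem_span_singleton.1 hx
      have e : (LinearPMap.mkSpanSingleton (K := ℝ) (1 : BM) (p 1) hone) ⟨c • 1, hx⟩ = c • p 1 :=
        LinearPMap.mkSpanSingleton'_apply _ _ _ _ _
      rw [e, smul_eq_mul]
      rcases le_or_gt c 0 with hc | hc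
      · exact (mul_nonpos_of_nonpos_of_nonneg hc (hp0 1)).trans (hp0 _)
      · exact (hom c hc 1).ge)
  have hl1' : l 1 = p 1 := by
    have := hl1 ⟨1, Submodule.mem_span_singleton_self 1⟩
    rw [this]
    exact LinearPMap.mkSpanSingleton'_apply_self _ _ _ _
  have hneg : ∀ f : BM, (∀ x, f.1 x ≤ 0) → p f ≤ 0 := by
    intro f hf
    refine hge _ _ fun g hg => ?_
    have : g = 0 := BM.ext' fun x => by
      have := hg x
      rw [max_eq_right (hf x)] at this
      simpa using this
    simp [this]
  have hpos : ∀ f : BM, (∀ x, 0 ≤ f.1 x) → 0 ≤ l f := by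
    intro f hf
    have := (hl2 (-f)).trans (hneg (-f) fun x => by rw [BM.neg_val]; linarith [hf x])
    rw [map_neg] at this; linarith
  have hind : ∀ A (hA : MeasurableSet A) η, Sm S A η → l (ind A hA) ≤ η := by
    intro A hA η h
    refine (hl2 _).trans (hge _ _ fun g hg => (hψ' _).trans (h g ?_ ?_))
    · intro x
      refine (hg x).trans ?_
      by_cases hx : x ∈ A
      · simp [ind_mem hA hx]
      · simp [ind_not_mem hA hx]
    · intro x hx
      have := hg x
      rw [ind_not_mem hA hx] at this
      simpa using this
  refine ⟨l, ⟨hpos, fun A hA h => le_antisymm (hind A hA 0 h) (hpos _ fun x => ?_)⟩, hind, ?_⟩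
  · by_cases hx : x ∈ A
    · simp [ind_mem hA hx]
    · simp [ind_not_mem hA hx]
  · intro f g hg hf
    have h1 : p (1 - f) ≤ p 1 - ψ (S g) := by
      refine hge _ _ fun h hh => ?_
      have := hle 1 (g + h) (fun x => by
        rw [BM.add_val, BM.one_val]
        have a := hg x
        have b := hh x
        rw [BM.sub_val, BM.one_val, max_eq_left (by linarith [hf x])] at b
        calc |g.1 x + h.1 x| ≤ |g.1 x| + |h.1 x| := abs_add_le _ _
          _ ≤ 1 := by linarith
          _ ≤ _ := le_max_left _ _)
      rw [map_add, map_add] at this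
      linarith
    have h2 := hl2 (1 - f)
    rw [map_sub, hl1'] at h2
    linarith

end

section
variable {X : Type*} [NormedAddCommGroup X] [NormedSpace ℝ X]

lemma Good.ind_mono {S : BM →ₗ[ℝ] X} {l : BM →ₗ[ℝ] ℝ} (h : Good S l) {A B : Set ℝ}
    (hA : MeasurableSet A) (hB : MeasurableSet B) (hAB : A ⊆ B) :
    l (ind A hA) ≤ l (ind B hB) := h.mono fun x => by
  by_cases hx : x ∈ A
  · rw [ind_mem hA hx, ind_mem hB (hAB hx)]
  · rw [ind_not_mem hA hx]
    by_cases hx : x ∈ B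
    · simp [ind_mem hB hx]
    · simp [ind_not_mem hB hx]

lemma ind_nonneg {A : Set ℝ} (hA : MeasurableSet A) (x : ℝ) : 0 ≤ (ind A hA).1 x := by
  by_cases hx : x ∈ A
  · simp [ind_mem hA hx]
  · simp [ind_not_mem hA hx]

lemma control_step {S : BM →ₗ[ℝ] X} {M : ℝ} (hM : 0 < M) (hS : OpBd S M) {ε : ℝ} (hε : 0 < ε)
    {l : BM →ₗ[ℝ] ℝ} (hl : Good S l) (f : BM) (hf : ∀ x, |f.1 x| ≤ 1)
    (hlt : √(l (f * f)) + ε < ‖S f‖) :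
    ∃ A, ∃ hA : MeasurableSet A, l (ind A hA) ≤ M ^ 2 / (ε / (2 * M)) ^ 2 ∧
      ∃ l' : BM →ₗ[ℝ] ℝ, Good S l' ∧
        (∀ B (hB : MeasurableSet B) η, Sm S B η → l' (ind B hB) ≤ η) ∧ ε / 2 < l' (ind A hA) := by
  set η := ε / (2 * M) with hη
  have hη0 : 0 < η := by positivity
  have hA : MeasurableSet {x | η < |f.1 x|} := by
    have := f.2.1
    measurability
  set A := {x | η < |f.1 x|} with hAdef
  have hsq : 0 ≤ l (f * f) := hl.1 _ fun x => mul_self_nonneg _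
  refine ⟨A, hA, ?_, ?_⟩
  · have h1 : l (η ^ 2 • ind A hA) ≤ l (f * f) := hl.mono fun x => by
      rw [BM.smul_val, BM.mul_val]
      by_cases hx : x ∈ A
      · rw [ind_mem hA hx, mul_one, ← abs_mul_abs_self, ← sq]
        have : η < |f.1 x| := hx
        gcongr
      · rw [ind_not_mem hA hx, mul_zero]; exact mul_self_nonneg _
    have h2 : √(l (f * f)) ≤ M := by
      have := hS f 1 zero_le_one hf
      linarith
    have h3 : l (f * f) ≤ M ^ 2 := by
      rw [Real.sqrt_le_left hM.le] at h2; exact h2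
    rw [map_smul, smul_eq_mul] at h1
    rw [le_div_iff₀ (by positivity)]
    linarith
  · obtain ⟨ψ, hψ1, hψ2⟩ := exists_dual_vector'' ℝ (S (ind A hA * f))
    obtain ⟨l', g1, g2, g3⟩ := exists_modulus hS ψ hψ1
    refine ⟨l', g1, g2, ?_⟩
    have h1 := g3 (ind A hA) (ind A hA * f) (fun x => by
      rw [BM.mul_val]
      by_cases hx : x ∈ A
      · simpa [ind_mem hA hx] using hf x
      · simp [ind_not_mem hA hx]) (fun x => by
      by_cases hx : x ∈ A
      · simp [ind_mem hA hx]
      · simp [ind_not_mem hA hx])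
    rw [hψ2] at h1
    have h2 : ‖S (f - ind A hA * f)‖ ≤ M * η := hS _ η hη0.le fun x => by
      rw [BM.sub_val, BM.mul_val]
      by_cases hx : x ∈ A
      · simpa [ind_mem hA hx] using hη0.le
      · rw [ind_not_mem hA hx, zero_mul, sub_zero]
        exact not_lt.1 hx
    have h3 : M * η = ε / 2 := by rw [hη]; field_simp
    have h4 : ‖S f‖ ≤ ‖S (ind A hA * f)‖ + ‖S (f - ind A hA * f)‖ := by
      rw [map_sub]
      have := norm_add_le (S (ind A hA * f)) (S f - S (ind A hA * f))
      rwa [add_sub_cancel] at this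
    have := Real.sqrt_nonneg (l (f * f))
    simp only [RCLike.ofReal_real_eq_id, id_eq] at h1
    linarith

lemma control_main [CompleteSpace X] (hX : ¬ ContainsC0 X) {S : BM →ₗ[ℝ] X} {M : ℝ} (hM : 0 < M)
    (hS : OpBd S M) {ε : ℝ} (hε : 0 < ε) :
    ∃ l : BM →ₗ[ℝ] ℝ, Good S l ∧
      ∀ f : BM, (∀ x, |f.1 x| ≤ 1) → ‖S f‖ ≤ √(l (f * f)) + ε := by
  by_contra hcon
  push Not at hcon
  set K := M ^ 2 / (ε / (2 * M)) ^ 2 with hK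
  have hK0 : 0 < K := by positivity
  set e := ε / 2 with he
  have he0 : 0 < e := by positivity
  obtain ⟨F, hF1, hF2⟩ := exists_seq_of_forall_finset_exists
    (α := ℕ × {A : Set ℝ // MeasurableSet A} × (BM →ₗ[ℝ] ℝ))
    (fun y => Good S y.2.2 ∧
      (∀ B (hB : MeasurableSet B) η, Sm S B η → y.2.2 (ind B hB) ≤ η) ∧
      e < y.2.2 (ind y.2.1.1 y.2.1.2))
    (fun x y => x.1 < y.1 ∧ x.2.2 (ind y.2.1.1 y.2.1.2) ≤ K * (1 / 2) ^ y.1) (by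
      intro s hs
      let n := s.sup (fun x => x.1) + 1
      have hgood : Good S ((2 : ℝ) ^ n • ∑ x ∈ s, x.2.2) := by
        constructor
        · intro f hf
          rw [LinearMap.smul_apply, LinearMap.sum_apply, smul_eq_mul]
          exact mul_nonneg (by positivity) (Finset.sum_nonneg fun x hx => (hs x hx).1.1 f hf)
        · intro A hA h
          rw [LinearMap.smul_apply, LinearMap.sum_apply, smul_eq_mul,
            Finset.sum_eq_zero fun x hx => (hs x hx).1.2 A hA h, mul_zero]
      obtain ⟨f, hf1, hf2⟩ := hcon _ hgood
      obtain ⟨A, hA, h1, l', h2, h3, h4⟩ := control_step hM hS hε hgood f hf1 hf2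
      refine ⟨(n, ⟨A, hA⟩, l'), ⟨h2, h3, h4⟩, fun x hx => ⟨?_, ?_⟩⟩
      · exact Nat.lt_succ_of_le (Finset.le_sup (f := fun x => x.1) hx)
      · rw [LinearMap.smul_apply, LinearMap.sum_apply, smul_eq_mul] at h1
        have h5 : x.2.2 (ind A hA) ≤ ∑ y ∈ s, y.2.2 (ind A hA) :=
          Finset.single_le_sum (f := fun y => y.2.2 (ind A hA))
            (fun y hy => (hs y hy).1.1 _ (ind_nonneg hA)) hx
        show x.2.2 (ind A hA) ≤ K * (1 / 2) ^ n
        rw [one_div, inv_pow, ← div_eq_mul_inv, le_div_iff₀ (by positivity), mul_comm]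
        exact le_trans (mul_le_mul_of_nonneg_left h5 (by positivity)) h1)
  set A : ℕ → Set ℝ := fun k => (F k).2.1.1 with hAdef
  have hA : ∀ k, MeasurableSet (A k) := fun k => (F k).2.1.2
  set l : ℕ → BM →ₗ[ℝ] ℝ := fun k => (F k).2.2 with hldef
  have hl : ∀ k, Good S (l k) := fun k => (hF1 k).1
  have hdom : ∀ k B (hB : MeasurableSet B) η, Sm S B η → l k (ind B hB) ≤ η :=
    fun k => (hF1 k).2.1
  have hbig : ∀ k, e < l k (ind (A k) (hA k)) := fun k => (hF1 k).2.2
  have hlev : ∀ k, k ≤ (F k).1 := by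
    have : StrictMono fun k => (F k).1 := fun m n h => (hF2 m n h).1
    exact fun k => this.le_apply
  have hsm : ∀ i k, i < k → l i (ind (A k) (hA k)) ≤ K * (1 / 2) ^ k := by
    intro i k hik
    refine (hF2 i k hik).2.trans ?_
    refine mul_le_mul_of_nonneg_left ?_ hK0.le
    exact pow_le_pow_of_le_one (by norm_num) (by norm_num) (hlev k)
  let C : ℕ → ℕ → Set ℝ := fun n q => ⋃ k ∈ Finset.Ico n q, A k
  have hCm : ∀ n q, MeasurableSet (C n q) := fun n q =>
    Finset.measurableSet_biUnion _ fun k _ => hA k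
  have hCmono : ∀ n, Monotone (C n) := by
    intro n q q' hq
    refine Set.biUnion_subset_biUnion_left fun k hk => ?_
    simp only [Finset.coe_Ico, Set.mem_Ico] at hk ⊢
    exact ⟨hk.1, hk.2.trans_le hq⟩
  have hth : ∀ n : ℕ, 0 < e / 4 * (1 / 2) ^ (n + 1) := fun n => by positivity
  choose p hp using fun n => exhaustive_mono hX hM hS (C n) (hCmono n) (hth n)
  let G : ℕ → Set ℝ := fun n => ⋂ j ∈ Finset.range n, C j (p j)
  have hGm : ∀ n, MeasurableSet (G n) := fun n =>
    Finset.measurableSet_biInter _ fun k _ => hCm _ _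
  have hGanti : Antitone G := by
    intro n q hq
    refine Set.biInter_subset_biInter_left fun k hk => ?_
    simp only [Finset.coe_range, Set.mem_Iio] at hk ⊢
    exact hk.trans_le hq
  have hAG : ∀ n k, n ≤ k → Sm S (A k \ G n) (e / 4 * (1 - (1 / 2) ^ n)) := by
    intro n
    induction n with
    | zero =>
      intro k _ f _ h2
      have : f = 0 := BM.ext' (fun x => h2 x (by simp [G]))
      rw [this]; simp
    | succ n ih =>
      intro k hk
      have h1 := Sm.union ((hA k).diff (hGm n)) (ih k (by omega)) (hp n (k + 1))
      refine h1.mono ?_ (le_of_eq (by ring))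
      rintro x ⟨hx1, hx2⟩
      by_cases hx : x ∈ G n
      · right
        refine ⟨Set.mem_biUnion (x := k) (by simp; omega) hx1, fun hx3 => hx2 ?_⟩
        simp only [G, Set.mem_iInter, Finset.mem_range] at hx ⊢
        intro i hi
        rcases Nat.lt_succ_iff_lt_or_eq.1 hi with h | h
        · exact hx i h
        · rw [h]; exact hx3
      · left; exact ⟨hx1, hx⟩
  obtain ⟨N, hN⟩ := exhaustive_mono hX hM hS (fun n => (G n)ᶜ)
    (fun _ _ h => Set.compl_subset_compl.2 (hGanti h)) (η := e / 4) (by positivity)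
  have hGl : ∀ n, N < n → l N (ind (G (n + 1)) (hGm _)) ≤ 2 * K * (1 / 2) ^ n := by
    intro n hn
    have h1 : l N (ind (G (n + 1)) (hGm _)) ≤
        l N (∑ k ∈ Finset.Ico n (p n), ind (A k) (hA k)) := (hl N).mono fun x => by
      rw [BM.sum_val]
      have h0 : ∀ k ∈ Finset.Ico n (p n), 0 ≤ (ind (A k) (hA k)).1 x :=
        fun k _ => ind_nonneg _ x
      by_cases hx : x ∈ G (n + 1)
      · rw [ind_mem _ hx]
        have hx' : x ∈ C n (p n) := by
          simp only [G, Set.mem_iInter, Finset.mem_range] at hx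
          exact hx n (by omega)
        simp only [C, Set.mem_iUnion] at hx'
        obtain ⟨k, hk, hxk⟩ := hx'
        rw [← ind_mem (hA k) hxk]
        exact Finset.single_le_sum (f := fun k => (ind (A k) (hA k)).1 x) h0 hk
      · rw [ind_not_mem _ hx]
        exact Finset.sum_nonneg h0
    rw [map_sum] at h1
    calc _ ≤ _ := h1
      _ ≤ ∑ k ∈ Finset.Ico n (p n), K * (1 / 2) ^ k := by
        refine Finset.sum_le_sum fun k hk => hsm N k ?_
        exact hn.trans_le (Finset.mem_Ico.1 hk).1
      _ = K * ∑ k ∈ Finset.Ico n (p n), (1 / 2 : ℝ) ^ k := by rw [Finset.mul_sum]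
      _ ≤ K * ((1 / 2) ^ n / (1 - 1 / 2)) :=
        mul_le_mul_of_nonneg_left (geom_sum_Ico_le_of_lt_one (by norm_num) (by norm_num)) hK0.le
      _ = _ := by ring
  obtain ⟨m, hm⟩ := exists_pow_lt_of_lt_one (show 0 < e / 4 / (2 * K) by positivity)
    (show (1 / 2 : ℝ) < 1 by norm_num)
  set n := max m (N + 1) with hn
  have h1 := hGl n (by omega)
  have h2 : 2 * K * (1 / 2) ^ n < e / 4 := by
    have : (1 / 2 : ℝ) ^ n ≤ (1 / 2) ^ m :=
      pow_le_pow_of_le_one (by norm_num) (by norm_num) (le_max_left _ _)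
    have h3 := this.trans_lt hm
    rw [lt_div_iff₀ (by positivity)] at h3
    linarith
  have h3 := hdom N _ ((hA N).diff (hGm N)) _ (hAG N N le_rfl)
  have h4 := hdom N _ ((hGm (n + 1)).compl.diff (hGm N).compl) _ (hN (n + 1))
  have h5 : l N (ind (A N) (hA N)) ≤ l N (ind _ ((hA N).diff (hGm N)) +
      ind _ ((hGm (n + 1)).compl.diff (hGm N).compl) + ind _ (hGm (n + 1))) := (hl N).mono fun x => by
    have a1 := ind_nonneg ((hA N).diff (hGm N)) x
    have a2 := ind_nonneg ((hGm (n + 1)).compl.diff (hGm N).compl) x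
    have a3 := ind_nonneg (hGm (n + 1)) x
    rw [BM.add_val, BM.add_val]
    by_cases hx : x ∈ A N
    · rw [ind_mem _ hx]
      by_cases hx1 : x ∈ G N
      · by_cases hx2 : x ∈ G (n + 1)
        · rw [ind_mem _ hx2] at *; linarith
        · have : x ∈ (G (n + 1))ᶜ \ (G N)ᶜ := ⟨hx2, fun h => h hx1⟩
          rw [ind_mem _ this] at *; linarith
      · have : x ∈ A N \ G N := ⟨hx, hx1⟩
        rw [ind_mem _ this] at *; linarith
    · rw [ind_not_mem _ hx]; linarith
  rw [map_add, map_add] at h5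
  have h6 := hbig N
  have h7 : e / 4 * (1 - (1 / 2 : ℝ) ^ N) ≤ e / 4 := by
    have : (0 : ℝ) ≤ (1 / 2) ^ N := by positivity
    nlinarith
  linarith

lemma weak_closure [CompleteSpace X] {S : BM →ₗ[ℝ] X}
    (hctl : ∀ ε > 0, ∃ l : BM →ₗ[ℝ] ℝ, Good S l ∧
      ∀ f : BM, (∀ x, |f.1 x| ≤ 1) → ‖S f‖ ≤ √(l (f * f)) + ε)
    (ξ : StrongDual ℝ (StrongDual ℝ X))
    (hξ : ∀ (F : Finset (StrongDual ℝ X)) (η : ℝ), 0 < η →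
      ∃ f : BM, (∀ x, |f.1 x| ≤ 1) ∧ ∀ ψ ∈ F, |ψ (S f) - ξ ψ| < η) :
    ∃ y : X, NormedSpace.inclusionInDoubleDual ℝ X y = ξ := by
  classical
  have happ : ∀ ε > 0, ∃ y : X, ‖NormedSpace.inclusionInDoubleDual ℝ X y - ξ‖ ≤ ε := by
    intro ε₀ hε₀
    set ε := ε₀ / 4 with hεdef
    have hε : 0 < ε := by positivity
    obtain ⟨l, hl, hlS⟩ := hctl ε hε
    let C : Finset (StrongDual ℝ X) → ℝ → Set BM := fun F η =>
      {f | (∀ x, |f.1 x| ≤ 1) ∧ ∀ ψ ∈ F, |ψ (S f) - ξ ψ| < η}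
    let R : Set ℝ := {s | ∃ F η, 0 < η ∧ ∀ g ∈ C F η, s ≤ l (g * g)}
    have hR0 : (0 : ℝ) ∈ R := ⟨∅, 1, one_pos, fun g _ => hl.1 _ fun x => mul_self_nonneg _⟩
    have hRb : BddAbove R := by
      refine ⟨l 1, ?_⟩
      rintro s ⟨F, η, hη, h⟩
      obtain ⟨f, hf1, hf2⟩ := hξ F η hη
      refine (h f ⟨hf1, hf2⟩).trans (hl.mono fun x => ?_)
      rw [BM.mul_val, BM.one_val, ← abs_mul_abs_self]
      have := hf1 x
      have := abs_nonneg (f.1 x)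
      nlinarith
    set r := sSup R with hr
    set δ := ε ^ 2 / 2 with hδ
    have hδ0 : 0 < δ := by positivity
    obtain ⟨s, ⟨F₀, η₀, hη₀, hs⟩, hsr⟩ := exists_lt_of_lt_csSup ⟨0, hR0⟩ (show r - δ < r by linarith)
    have hnear : ∀ F η, 0 < η → ∃ g ∈ C F η, l (g * g) < r + δ := by
      intro F η hη
      by_contra h
      push Not at h
      have := le_csSup hRb (show r + δ ∈ R from ⟨F, η, hη, h⟩)
      linarith
    obtain ⟨g₀, hg₀, hg₀'⟩ := hnear F₀ η₀ hη₀
    refine ⟨S g₀, ?_⟩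
    refine ContinuousLinearMap.opNorm_le_bound _ hε₀.le fun ψ => ?_
    have hψ : ∀ η > 0, |ψ (S g₀) - ξ ψ| ≤ ε₀ * ‖ψ‖ + η := by
      intro η hη
      obtain ⟨g, hg, hg'⟩ := hnear (insert ψ F₀) (min η η₀) (lt_min hη hη₀)
      have hm : (1 / 2 : ℝ) • (g + g₀) ∈ C F₀ η₀ := by
        constructor
        · intro x
          rw [BM.smul_val, BM.add_val]
          have h1 := abs_le.1 (hg.1 x)
          have h2 := abs_le.1 (hg₀.1 x)
          rw [abs_le]; constructor <;> linarith
        · intro φ hφ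
          have h1 := abs_lt.1 ((hg.2 φ (Finset.mem_insert_of_mem hφ)).trans_le (min_le_right _ _))
          have h2 := abs_lt.1 (hg₀.2 φ hφ)
          simp only [map_smul, map_add, smul_eq_mul]
          rw [abs_lt]; constructor <;> linarith
      have h1 := hs _ hm
      set h : BM := (1 / 2 : ℝ) • (g - g₀) with hh
      have hpar : h * h = (1 / 2 : ℝ) • (g * g) + (1 / 2 : ℝ) • (g₀ * g₀) -
          ((1 / 2 : ℝ) • (g + g₀)) * ((1 / 2 : ℝ) • (g + g₀)) := BM.ext' fun x => by
        simp only [hh, BM.sub_val, BM.add_val, BM.mul_val, BM.smul_val]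
        ring
      have h2 : l (h * h) ≤ ε ^ 2 := by
        rw [hpar]
        simp only [map_sub, map_add, map_smul, smul_eq_mul] at h1 ⊢
        linarith
      have h3 : ‖S h‖ ≤ 2 * ε := by
        have := hlS h (fun x => by
          simp only [hh, BM.smul_val, BM.sub_val]
          have h1 := abs_le.1 (hg.1 x)
          have h2 := abs_le.1 (hg₀.1 x)
          rw [abs_le]; constructor <;> linarith)
        have h4 : √(l (h * h)) ≤ ε := by rw [Real.sqrt_le_left hε.le]; exact h2
        linarith
      have h4 : ψ (S g₀) - ξ ψ = (ψ (S g) - ξ ψ) - 2 * ψ (S h) := by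
        simp only [hh, map_smul, map_sub, smul_eq_mul]; ring
      have h5 : |ψ (S h)| ≤ ‖ψ‖ * (2 * ε) := (ψ.le_opNorm _).trans (by gcongr)
      have h6 := (hg.2 ψ (Finset.mem_insert_self _ _)).trans_le (min_le_left _ _)
      rw [h4]
      calc _ ≤ |ψ (S g) - ξ ψ| + |2 * ψ (S h)| := abs_sub _ _
        _ ≤ η + 2 * (‖ψ‖ * (2 * ε)) := by
          rw [abs_mul, abs_two]; gcongr
        _ = _ := by rw [hεdef]; ring
    have := le_of_forall_pos_le_add hψ
    simpa using this
  have hcl : IsClosed (Set.range (NormedSpace.inclusionInDoubleDualLi (E := X) ℝ)) :=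
    (NormedSpace.inclusionInDoubleDualLi (E := X) ℝ).isometry.isUniformInducing.isComplete_range.isClosed
  have hmem : ξ ∈ closure (Set.range (NormedSpace.inclusionInDoubleDualLi (E := X) ℝ)) := by
    refine (Metric.mem_closure_iff (α := StrongDual ℝ (StrongDual ℝ X))).2 ?_
    intro ε hε
    obtain ⟨y, hy⟩ := happ (ε / 2) (by positivity)
    refine ⟨_, ⟨y, rfl⟩, ?_⟩
    have hd : ∀ a b : StrongDual ℝ (StrongDual ℝ X), dist a b = ‖b - a‖ := fun a b => by
      rw [dist_comm]; exact dist_eq_norm b a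
    exact (hd _ _).trans_lt (hy.trans_lt (by linarith))
  rw [hcl.closure_eq] at hmem
  exact hmem

end

lemma BM.memLp (f : BM) : MemLp f.1 ∞ μ01 := by
  obtain ⟨C, hC⟩ := f.2.2
  exact memLp_top_of_bound f.2.1.aestronglyMeasurable C (Eventually.of_forall hC)

/-- The class map. -/
noncomputable def toLinf : BM →ₗ[ℝ] Lp ℝ ∞ μ01 where
  toFun f := (BM.memLp f).toLp f.1
  map_add' _ _ := rfl
  map_smul' _ _ := rfl

lemma toLinf_ae (f : BM) : toLinf f =ᵐ[μ01] f.1 := (BM.memLp f).coeFn_toLp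

lemma toLinf_eq_iff (f g : BM) : toLinf f = toLinf g ↔ f.1 =ᵐ[μ01] g.1 :=
  MemLp.toLp_eq_toLp_iff (BM.memLp f) (BM.memLp g)

lemma toLinf_norm_le (f : BM) {c : ℝ} (hc : 0 ≤ c) (h : ∀ x, |f.1 x| ≤ c) : ‖toLinf f‖ ≤ c := by
  have h1 : ∀ᵐ x ∂μ01, ‖toLinf f x‖ ≤ c := by
    filter_upwards [toLinf_ae f] with x hx
    rw [hx]; exact h x
  have := Lp.norm_le_of_ae_bound hc h1
  simpa using this

lemma Linf_ae_le (F : Lp ℝ ∞ μ01) : ∀ᵐ x ∂μ01, |F x| ≤ ‖F‖ := by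
  have h1 := ae_le_eLpNormEssSup (f := F) (μ := μ01)
  filter_upwards [h1] with x hx
  rw [Lp.norm_def, eLpNorm_exponent_top]
  have h2 : eLpNormEssSup F μ01 ≠ ∞ := by
    have := Lp.eLpNorm_ne_top F
    rwa [eLpNorm_exponent_top] at this
  have := ENNReal.toReal_mono h2 hx
  simpa using this

lemma exists_lift (F : Lp ℝ ∞ μ01) : ∃ f : BM, toLinf f = F ∧ ∀ x, |f.1 x| ≤ ‖F‖ := by
  have hb : ∀ x, |max (-‖F‖) (min (F x) ‖F‖)| ≤ ‖F‖ := fun x => by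
    rw [abs_le]
    exact ⟨le_max_left _ _, max_le (by linarith [norm_nonneg F]) (min_le_right _ _)⟩
  refine ⟨⟨fun x => max (-‖F‖) (min (F x) ‖F‖), ?_, ‖F‖, hb⟩, ?_, hb⟩
  · have := (Lp.stronglyMeasurable F).measurable
    fun_prop
  · apply Lp.ext
    filter_upwards [toLinf_ae ⟨fun x => max (-‖F‖) (min (F x) ‖F‖), by
      have := (Lp.stronglyMeasurable F).measurable
      fun_prop, ‖F‖, hb⟩, Linf_ae_le F] with x hx h2
    rw [hx]
    have := abs_le.1 h2
    rw [min_eq_left this.2, max_eq_right this.1]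

section
variable {X : Type*} [NormedAddCommGroup X] [NormedSpace ℝ X]

lemma Good.ae_mono {T : Lp ℝ ∞ μ01 →L[ℝ] X} {l : BM →ₗ[ℝ] ℝ}
    (hl : Good (T.toLinearMap ∘ₗ toLinf) l) {f g : BM} (h : ∀ᵐ x ∂μ01, f.1 x ≤ g.1 x) :
    l f ≤ l g := by
  have hN : MeasurableSet {x | ¬ f.1 x ≤ g.1 x} := by
    have := f.2.1; have := g.2.1
    exact (measurableSet_le f.2.1 g.2.1).compl
  have h0 : l (ind _ hN) = 0 := by
    refine hl.2 _ hN fun u _ hu => ?_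
    have : toLinf u = 0 := by
      rw [← map_zero toLinf, toLinf_eq_iff]
      filter_upwards [h] with x hx
      exact hu x (by simpa using hx)
    simp [this]
  obtain ⟨C, hC⟩ := (f - g).2.2
  have h1 : l f ≤ l (g + C • ind _ hN) := hl.mono fun x => by
    rw [BM.add_val, BM.smul_val]
    by_cases hx : f.1 x ≤ g.1 x
    · rw [ind_not_mem hN (by simpa using hx)]; linarith
    · rw [ind_mem hN hx]
      have := (le_abs_self _).trans (hC x)
      rw [BM.sub_val] at this
      linarith
  rw [map_add, map_smul, h0] at h1
  simpa using h1

lemma opBd_T (T : Lp ℝ ∞ μ01 →L[ℝ] X) : OpBd (T.toLinearMap ∘ₗ toLinf) (‖T‖ + 1) := by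
  intro f c hc hf
  calc ‖T (toLinf f)‖ ≤ ‖T‖ * ‖toLinf f‖ := T.le_opNorm _
    _ ≤ ‖T‖ * c := by gcongr; exact toLinf_norm_le f hc hf
    _ ≤ (‖T‖ + 1) * c := by nlinarith

lemma weaklyCompact_of [CompleteSpace X] (hX : ¬ ContainsC0 X) (T : Lp ℝ ∞ μ01 →L[ℝ] X) :
    WeaklyCompactOperator T := by
  unfold WeaklyCompactOperator
  have hM : 0 < ‖T‖ + 1 := by positivity
  apply NormedSpace.isCompact_closure_of_isBounded
  · refine (Metric.isBounded_closedBall (x := (0 : X)) (r := ‖T‖)).subset ?_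
    rintro x ⟨F, hF, hFx⟩
    have : T F = x := hFx
    rw [mem_closedBall_zero_iff] at hF ⊢
    rw [← this]
    calc _ ≤ ‖T‖ * ‖F‖ := T.le_opNorm _
      _ ≤ ‖T‖ * 1 := by gcongr
      _ = _ := mul_one _
  · intro ξ hξ
    obtain ⟨y, hy⟩ := weak_closure (S := T.toLinearMap ∘ₗ toLinf)
      (fun ε hε => control_main hX hM (opBd_T T) hε) (WeakDual.toStrongDual ξ) (by
        intro F η hη
        let U : Set (WeakDual ℝ (StrongDual ℝ X)) := ⋂ ψ ∈ F, {ζ | |ζ ψ - ξ ψ| < η}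
        have hU : IsOpen U := by
          refine isOpen_biInter_finset fun ψ _ => ?_
          have : Continuous fun ζ : WeakDual ℝ (StrongDual ℝ X) => ζ ψ := WeakDual.eval_continuous ψ
          exact isOpen_lt (continuous_abs.comp (this.sub continuous_const)) continuous_const
        have hξU : ξ ∈ U := by simp [U, hη]
        obtain ⟨ζ, hζ, ⟨_, ⟨G, hG, rfl⟩, rfl⟩⟩ := mem_closure_iff.1 hξ U hU hξU
        obtain ⟨f, hf1, hf2⟩ := exists_lift G
        refine ⟨f, fun x => (hf2 x).trans (by simpa using hG), fun ψ hψ => ?_⟩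
        simp only [U, Set.mem_iInter] at hζ
        have := hζ ψ hψ
        show |ψ (T (toLinf f)) - ξ ψ| < η
        rw [hf1]
        exact this)
    exact ⟨toWeakSpace ℝ X y, hy⟩

lemma strictlySingular_of [CompleteSpace X] (hX : ¬ ContainsC0 X) (T : Lp ℝ ∞ μ01 →L[ℝ] X) :
    StrictlySingular T := by
  classical
  rintro Y - hY ⟨c, hc, hT⟩
  have hM : 0 < ‖T‖ + 1 := by positivity
  obtain ⟨l, hl, hlS⟩ := control_main hX hM (opBd_T T) (show 0 < c / 2 by positivity)
  have hlpos : ∀ f : BM, 0 ≤ l (f * f) := fun f => hl.1 _ fun x => mul_self_nonneg _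
  -- the key inequality
  have key : ∀ f : BM, toLinf f ∈ Y → c / 2 * ‖toLinf f‖ ≤ √(l (f * f)) := by
    intro f hf
    obtain ⟨f₀, h1, h2⟩ := exists_lift (toLinf f)
    have h3 : l (f₀ * f₀) ≤ l (f * f) := hl.ae_mono (by
      filter_upwards [(toLinf_eq_iff _ _).1 h1] with x hx
      rw [BM.mul_val, BM.mul_val, hx])
    refine le_trans ?_ (Real.sqrt_le_sqrt h3)
    set n := ‖toLinf f‖ with hn
    rcases (norm_nonneg (toLinf f)).eq_or_lt with h0 | h0
    · rw [hn, ← h0, mul_zero]; exact Real.sqrt_nonneg _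
    rw [← hn] at h0
    have h4 := hlS (n⁻¹ • f₀) (fun x => by
      rw [BM.smul_val, abs_mul, abs_of_pos (inv_pos.2 h0), inv_mul_le_iff₀ h0, mul_one]
      exact h2 x)
    have h5 : (n⁻¹ • f₀) * (n⁻¹ • f₀) = (n⁻¹) ^ 2 • (f₀ * f₀) := BM.ext' fun x => by
      simp only [BM.mul_val, BM.smul_val]; ring
    rw [h5, map_smul, map_smul, norm_smul, smul_eq_mul, Real.sqrt_mul (by positivity),
      Real.sqrt_sq (by positivity), Real.norm_of_nonneg (by positivity)] at h4
    have h6 : c * n ≤ ‖T (toLinf f₀)‖ := by rw [h1]; exact hT _ hf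
    have h7 : n * (n⁻¹ * ‖T (toLinf f₀)‖) ≤ n * (n⁻¹ * √(l (f₀ * f₀)) + c / 2) :=
      mul_le_mul_of_nonneg_left h4 h0.le
    rw [mul_add, mul_inv_cancel_left₀ h0.ne', mul_inv_cancel_left₀ h0.ne'] at h7
    linarith
  -- orthonormal systems
  have orth : ∀ n : ℕ, ∃ v : ℕ → BM, ∀ i < n, toLinf (v i) ∈ Y ∧
      ∀ j < n, l (v i * v j) = if i = j then 1 else 0 := by
    intro n
    induction n with
    | zero => exact ⟨fun _ => 0, fun i hi => absurd hi (Nat.not_lt_zero _)⟩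
    | succ n ih =>
      obtain ⟨v, hv⟩ := ih
      let W : Submodule ℝ (Lp ℝ ∞ μ01) :=
        Submodule.span ℝ (((Finset.range n).image fun i => toLinf (v i)) : Finset _)
      have hW : ¬ Y ≤ W := by
        intro h
        exact hY (Submodule.finiteDimensional_of_le h)
      obtain ⟨G, hGY, hGW⟩ := Set.not_subset.1 hW
      obtain ⟨g, hg, -⟩ := exists_lift G
      let p : BM := ∑ i ∈ Finset.range n, l (g * v i) • v i
      have hpY : toLinf p ∈ Y := by
        simp only [p, map_sum, map_smul]
        exact Y.sum_mem fun i hi => Y.smul_mem _ (hv i (Finset.mem_range.1 hi)).1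
      have hpW : toLinf p ∈ W := by
        simp only [p, map_sum, map_smul]
        refine W.sum_mem fun i hi => W.smul_mem _ (Submodule.subset_span ?_)
        exact Finset.mem_coe.2 (Finset.mem_image_of_mem _ hi)
      set h : BM := g - p with hh
      have hhY : toLinf h ∈ Y := by
        rw [hh, map_sub, hg]; exact Y.sub_mem hGY hpY
      have hh0 : toLinf h ≠ 0 := by
        intro h0
        rw [hh, map_sub, hg, sub_eq_zero] at h0
        exact hGW (h0 ▸ hpW)
      have hort : ∀ j < n, l (h * v j) = 0 := by
        intro j hj
        have e : h * v j = g * v j - ∑ i ∈ Finset.range n, l (g * v i) • (v i * v j) := by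
          rw [hh, sub_mul, Finset.sum_mul]
          simp only [smul_mul_assoc]
        rw [e, map_sub, map_sum, Finset.sum_eq_single_of_mem j (Finset.mem_range.2 hj)]
        · rw [map_smul, (hv j hj).2 j hj, if_pos rfl]; simp
        · intro i hi hij
          rw [map_smul, (hv i (Finset.mem_range.1 hi)).2 j hj, if_neg hij]; simp
      set t := √(l (h * h)) with ht
      have htpos : 0 < t := lt_of_lt_of_le (mul_pos (by positivity) (norm_pos_iff.2 hh0)) (key h hhY)
      have htt : t * t = l (h * h) := Real.mul_self_sqrt (hlpos h)
      refine ⟨Function.update v n (t⁻¹ • h), fun i hi => ⟨?_, fun j hj => ?_⟩⟩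
      · rcases Nat.lt_succ_iff_lt_or_eq.1 hi with h1 | h1
        · rw [Function.update_of_ne h1.ne]; exact (hv i h1).1
        · rw [h1, Function.update_self, map_smul]; exact Y.smul_mem _ hhY
      · rcases Nat.lt_succ_iff_lt_or_eq.1 hi with h1 | h1 <;>
          rcases Nat.lt_succ_iff_lt_or_eq.1 hj with h2 | h2
        · rw [Function.update_of_ne h1.ne, Function.update_of_ne h2.ne]; exact (hv i h1).2 j h2
        · rw [h2, Function.update_of_ne h1.ne, Function.update_self, mul_comm, smul_mul_assoc,
            map_smul, hort i h1, smul_zero, if_neg h1.ne]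
        · rw [h1, Function.update_of_ne h2.ne, Function.update_self, smul_mul_assoc,
            map_smul, hort j h2, smul_zero, if_neg h2.ne']
        · rw [h1, h2, Function.update_self, smul_mul_assoc, mul_smul_comm, map_smul, map_smul,
            ← htt, if_pos rfl, smul_eq_mul, smul_eq_mul]
          field_simp
  set D := 2 / c with hD
  have hD0 : 0 < D := by positivity
  have hbound : ∀ n : ℕ, (n : ℝ) ≤ D ^ 2 * l 1 := by
    intro n
    obtain ⟨v, hv⟩ := orth n
    have hcomb : ∀ a : Fin n → ℝ, ∀ᵐ x ∂μ01,
        |∑ i, a i * (v i).1 x| ≤ D * √(∑ i, a i ^ 2) := by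
      intro a
      let f : BM := ∑ i : Fin n, a i • v i
      have hf : toLinf f ∈ Y := by
        simp only [f, map_sum, map_smul]
        exact Y.sum_mem fun i _ => Y.smul_mem _ (hv i i.2).1
      have hff : l (f * f) = ∑ i, a i ^ 2 := by
        have e : f * f = ∑ i : Fin n, ∑ j : Fin n, (a i * a j) • (v i * v j) := by
          simp only [f, Finset.sum_mul_sum, smul_mul_smul_comm]
        rw [e, map_sum]
        refine Finset.sum_congr rfl fun i _ => ?_
        rw [map_sum, Finset.sum_eq_single_of_mem i (Finset.mem_univ _)]
        · rw [map_smul, (hv i i.2).2 i i.2, if_pos rfl, smul_eq_mul]; ring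
        · intro j _ hji
          rw [map_smul, (hv i i.2).2 j j.2, if_neg (fun h => hji (Fin.ext h).symm), smul_zero]
      have hk := key f hf
      rw [hff] at hk
      have hk' : ‖toLinf f‖ ≤ D * √(∑ i, a i ^ 2) := by
        rw [hD, div_mul_eq_mul_div, le_div_iff₀ hc]; linarith
      filter_upwards [Linf_ae_le (toLinf f), toLinf_ae f] with x h1 h2
      rw [h2] at h1
      have h3 : f.1 x = ∑ i, a i * (v i).1 x := by
        simp only [f, BM.sum_val, BM.smul_val]
      rw [h3] at h1
      exact h1.trans hk'
    have hrat : ∀ᵐ x ∂μ01, ∀ a : Fin n → ℚ,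
        |∑ i, (a i : ℝ) * (v i).1 x| ≤ D * √(∑ i, (a i : ℝ) ^ 2) :=
      ae_all_iff.2 fun a => hcomb fun i => (a i : ℝ)
    have hsum : ∀ᵐ x ∂μ01, (∑ i : Fin n, v i * v i).1 x ≤ (D ^ 2 • (1 : BM)).1 x := by
      filter_upwards [hrat] with x hx
      have hdense : DenseRange (Pi.map (fun (_ : Fin n) (q : ℚ) => (q : ℝ))) :=
        DenseRange.piMap fun _ => Rat.denseRange_cast
      have hreal : ∀ a : Fin n → ℝ, |∑ i, a i * (v i).1 x| ≤ D * √(∑ i, a i ^ 2) := by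
        intro a
        refine hdense.induction_on (p := fun a : Fin n → ℝ =>
          |∑ i, a i * (v i).1 x| ≤ D * √(∑ i, a i ^ 2)) a ?_ ?_
        · exact isClosed_le (by fun_prop) (by fun_prop)
        · intro b; exact hx b
      have h1 := hreal fun i => (v i).1 x
      rw [BM.sum_val, BM.smul_val, BM.one_val, mul_one]
      simp only [BM.mul_val]
      set s := ∑ i : Fin n, (v i).1 x * (v i).1 x with hs
      have hs0 : 0 ≤ s := Finset.sum_nonneg fun i _ => mul_self_nonneg _
      have hs' : ∑ i : Fin n, (v i).1 x ^ 2 = s := by simp only [hs, sq]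
      rw [hs', abs_of_nonneg hs0] at h1
      have h2 := Real.mul_self_sqrt hs0
      have h3 := Real.sqrt_nonneg s
      have h4 : √s ≤ D := by
        by_contra hcon
        push Not at hcon
        nlinarith
      nlinarith
    have h1 := hl.ae_mono hsum
    rw [map_sum, map_smul, smul_eq_mul] at h1
    have h2 : ∑ i : Fin n, l (v i * v i) = n := by
      rw [Finset.sum_congr rfl fun (i : Fin n) _ => (hv i i.2).2 i i.2]
      simp
    rw [h2] at h1
    exact h1
  obtain ⟨n, hn⟩ := exists_nat_gt (D ^ 2 * l 1)
  exact absurd (hbound n) (not_le.2 hn)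

end


/-- Every bounded operator from `L_∞[0,1]` into a Banach space `X`
containing no subspace isomorphic to `c₀` is weakly compact, and hence strictly
singular. -/
theorem statement7 {X : Type*} [NormedAddCommGroup X] [NormedSpace ℝ X] [CompleteSpace X]
    (hX : ¬ ContainsC0 X) (T : Lp ℝ ∞ μ01 →L[ℝ] X) :
    WeaklyCompactOperator T ∧ StrictlySingular T :=
  ⟨weaklyCompact_of hX T, strictlySingular_of hX T⟩
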